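/- Let n ≥ 1 and suppose the Kasteleyn matrix K_n, regarded as a matrix over ℚ, is invertible. Then for every integer 0 ≤ i ≤ n−1, the ((2i,2n+1), b_n) entry of K_n⁻¹ equals (−1)^{n−i} · p(n,i,0). -/

import Mathlib

open Finset

/-- Membership predicate for the vertex set `V_n` of the TSSCPP graph `G_n`:
`0 ≤ x₁ ≤ 2n`, `x₁ ≤ x₂ ≤ 2n+1`, with `(2n,2n+1)` removed when `n` is odd. -/
def memV (n : ℕ) (x : ℤ × ℤ) : Prop :=
  0 ≤ x.1 ∧ x.1 ≤ 2*(n:ℤ) ∧ x.1 ≤ x.2 ∧ x.2 ≤ 2*(n:ℤ)+1 ∧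
    ¬(n % 2 = 1 ∧ x.1 = 2*(n:ℤ) ∧ x.2 = 2*(n:ℤ)+1)

instance memV.decPred (n : ℕ) : DecidablePred (memV n) := fun x => by
  unfold memV; infer_instance

/-- The vertex set `V_n` as a finite set. -/
noncomputable def Vfin (n : ℕ) : Finset (ℤ × ℤ) :=
  (Finset.Icc (0:ℤ) (2*(n:ℤ)) ×ˢ Finset.Icc (0:ℤ) (2*(n:ℤ)+1)).filter (memV n)

/-- The vertex set `V_n` as a set. -/
def Vset (n : ℕ) : Set (ℤ × ℤ) := {x | memV n x}

/-- The distinguished vertex `b_n = (2n, 2n+1-(n mod 2))`. -/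
def bvertex (n : ℕ) : ℤ × ℤ := (2*(n:ℤ), 2*(n:ℤ)+1 - ((n % 2 : ℕ) : ℤ))

/-- Edge relation (with `x` the "lower-left" endpoint) of the TSSCPP graph `G_n`:
horizontal edges `((x₁,x₂),(x₁+1,x₂))` for `0 ≤ x₁ ≤ 2n−1`, `x₁ ≤ x₂ ≤ 2n+1`, `x₁+x₂` odd;
vertical edges `((x₁,x₂),(x₁,x₂+1))` for `0 ≤ x₁ ≤ 2n` (`2n−1` when `n` odd), `x₁ ≤ x₂ ≤ 2n`;
diagonal edges `((x₁,x₁),(x₁+1,x₁+1))` for `0 ≤ x₁ ≤ 2n−1`. -/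
def edgeRel (n : ℕ) (x y : ℤ × ℤ) : Prop :=
  (y.1 = x.1 + 1 ∧ y.2 = x.2 ∧ 0 ≤ x.1 ∧ x.1 ≤ 2*(n:ℤ) - 1 ∧ x.1 ≤ x.2 ∧
      x.2 ≤ 2*(n:ℤ)+1 ∧ Odd (x.1 + x.2)) ∨
  (y.1 = x.1 ∧ y.2 = x.2 + 1 ∧ 0 ≤ x.1 ∧ x.1 ≤ 2*(n:ℤ) - ((n % 2 : ℕ) : ℤ) ∧
      x.1 ≤ x.2 ∧ x.2 ≤ 2*(n:ℤ)) ∨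
  (x.1 = x.2 ∧ y.1 = x.1 + 1 ∧ y.2 = x.2 + 1 ∧ 0 ≤ x.1 ∧ x.1 ≤ 2*(n:ℤ) - 1)

/-- The TSSCPP graph `G_n` (as a graph on all of `ℤ × ℤ`; all of its edges join
vertices of `V_n`). -/
def Gph (n : ℕ) : SimpleGraph (ℤ × ℤ) where
  Adj x y := edgeRel n x y ∨ edgeRel n y x
  symm := ⟨fun x y h => Or.symm h⟩
  loopless := by
    refine ⟨?_⟩
    rintro ⟨x1, x2⟩ (h | h) <;>
      rcases h with ⟨h1, h2, -⟩ | ⟨h1, h2, -⟩ | ⟨h0, h1, h2, -⟩ <;> omega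

/-- `Zpm n U` = number of perfect matchings of the subgraph of `G_n` induced on `V_n \ U`. -/
noncomputable def Zpm (n : ℕ) (U : Set (ℤ × ℤ)) : ℕ :=
  Nat.card {M : ((Gph n).induce (Vset n \ U)).Subgraph // M.IsPerfectMatching}

/-- The entry function `k(x,y)` of the Kasteleyn matrix. -/
def kfun (x y : ℤ × ℤ) : ℚ :=
  if ((x.1 + x.2) % 2 = 0 ∧ x.2 = y.2 ∧ x.1 - y.1 = 1) ∨
     ((x.1 + x.2) % 2 = 0 ∧ x.1 = y.1 ∧ (y.2 - x.2 = 1 ∨ x.2 - y.2 = 1)) ∨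
     (x.1 = x.2 ∧ y.1 = y.2 ∧ y.1 = x.1 - 1)
  then 1 else 0

/-- The Kasteleyn matrix `K_n` of `G_n` over `ℚ`, rows and columns indexed by `V_n`. -/
def Kmat (n : ℕ) : Matrix ↥(Vfin n) ↥(Vfin n) ℚ :=
  fun x y => kfun x.val y.val - kfun y.val x.val

/-- `p(n,k,ℓ) = (−1)^k (3n−3k+2) C_{n−k} (n+k−2ℓ+1)! (2n−k−ℓ+1)! / ((k−ℓ)! (3n−k+2−2ℓ)!)`. -/
def pnk (n k l : ℕ) : ℚ :=
  (-1)^k * (3*(n:ℚ) - 3*(k:ℚ) + 2) * (catalan (n-k) : ℚ) *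
    (Nat.factorial (n+k-2*l+1) : ℚ) * (Nat.factorial (2*n-k-l+1) : ℚ) /
    ((Nat.factorial (k-l) : ℚ) * (Nat.factorial (3*n-k+2-2*l) : ℚ))

/-!
Away from `b_n`, the equations `K_n v = e_{b_n}` are local recurrences which determine `v` from its
values `T_m` at the vertices `(2(n-m), 2n+1)`. Collect the entries with fixed height `x₂ - x₁` in a
power series in `y`, with exponent `2n - x₁`. Height `2k+1` then carries `y^{2k} S(-y(1+y))`, where
`S` is `T = ∑ T_m z^m` without its first `k` terms, divided by `z^k`; height `2k` carries
`(-1)^k (1+y)^k D(y)`, where `D(y)` is the series of the diagonal. What remains are two conditions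
on `T` at the boundary of `V_n`: `T(-2) = 0`, from the corner `(0, 0)`, and the vanishing of the
coefficients of `y^{2l}` in `(1+y)^{l+1} D(y)`, from the upper side. For the hypergeometric `T_m` of
the theorem, the first is a telescoping sum, and the second reduces to the vanishing of certain
moments of the `T_m`, which satisfy a first-order recurrence that is again a telescoping sum.
-/

open Polynomial (C X)
open scoped Polynomial PowerSeries

section BinomialCoefficients

/-- The reciprocal factorial `1 / z!`, which vanishes at negative integers, so that
`mul_invFactorial` holds without side conditions. -/
def invFactorial : ℤ → ℚ
  | Int.ofNat k => (k.factorial : ℚ)⁻¹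
  | Int.negSucc _ => 0

lemma invFactorial_natCast (k : ℕ) : invFactorial k = (k.factorial : ℚ)⁻¹ := rfl

lemma invFactorial_of_neg {z : ℤ} (hz : z < 0) : invFactorial z = 0 := by
  obtain ⟨k, rfl⟩ := Int.eq_negSucc_of_lt_zero hz
  rfl

lemma mul_invFactorial (z : ℤ) : (z : ℚ) * invFactorial z = invFactorial (z - 1) := by
  rcases lt_trichotomy z 0 with hz | rfl | hz
  · rw [invFactorial_of_neg hz, invFactorial_of_neg (by omega), mul_zero]
  · rw [invFactorial_of_neg (z := 0 - 1) (by omega), Int.cast_zero, zero_mul]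
  · obtain ⟨k, rfl⟩ : ∃ k : ℕ, z = (k + 1 : ℕ) := ⟨(z - 1).toNat, by omega⟩
    have := k.factorial_ne_zero
    rw [show ((k + 1 : ℕ) : ℤ) - 1 = k by omega, invFactorial_natCast, invFactorial_natCast,
      Nat.factorial_succ]
    push_cast
    field_simp

lemma choose_eq_factorial_mul_invFactorial (N k : ℕ) :
    (N.choose k : ℚ) = N.factorial * invFactorial k * invFactorial (N - k) := by
  rcases le_or_gt k N with hk | hk
  · rw [Nat.cast_choose ℚ hk, ← Nat.cast_sub hk, invFactorial_natCast, invFactorial_natCast]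
    field_simp
  · rw [Nat.choose_eq_zero_of_lt hk, invFactorial_of_neg (z := N - k) (by omega), Nat.cast_zero,
      mul_zero]

lemma coeff_X_pow_mul_one_add_X_pow (m N j : ℕ) :
    (X ^ m * (1 + X) ^ N : ℚ[X]).coeff j
      = N.factorial * invFactorial (j - m) * invFactorial (N + m - j) := by
  rw [Polynomial.coeff_X_pow_mul']
  split_ifs with hm
  · rw [Polynomial.coeff_one_add_X_pow, choose_eq_factorial_mul_invFactorial, Nat.cast_sub hm,
      sub_sub_eq_add_sub]
  · rw [invFactorial_of_neg (z := j - m) (by omega), mul_zero, zero_mul]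

variable {R : Type*} [CommRing R]

lemma cast_choose_ne_zero [CharZero R] {N k : ℕ} (hk : k ≤ N) : (N.choose k : R) ≠ 0 :=
  Nat.cast_ne_zero.mpr (Nat.choose_ne_zero hk)

lemma cast_sub_mul_choose_succ {a k : ℕ} (h : k ≤ a + 1) :
    ((a : R) + 1 - k) * (a + 1).choose k = (a + 1) * a.choose k := by
  have := congrArg (Nat.cast (R := R)) (Nat.choose_mul_succ_eq a k)
  push_cast [Nat.cast_sub h] at this
  linear_combination -this

lemma cast_succ_mul_choose_succ_succ (a k : ℕ) :
    ((k : R) + 1) * (a + 1).choose (k + 1) = (a + 1) * a.choose k := by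
  have := congrArg (Nat.cast (R := R)) (Nat.add_one_mul_choose_eq a k)
  push_cast at this
  linear_combination -this

lemma cast_catalan_succ (m : ℕ) :
    ((m : ℚ) + 2) * catalan (m + 1) = 2 * (2 * m + 1) * catalan m := by
  have h := Nat.succ_mul_centralBinom_succ m
  rw [← succ_mul_catalan_eq_centralBinom, ← succ_mul_catalan_eq_centralBinom] at h
  have hq : ((m : ℚ) + 1) * ((m + 1 + 1) * catalan (m + 1))
      = 2 * (2 * m + 1) * ((m + 1) * catalan m) := by exact_mod_cast h
  apply mul_left_cancel₀ (Nat.cast_add_one_ne_zero m : (m : ℚ) + 1 ≠ 0)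
  linear_combination hq

end BinomialCoefficients

section TopWeights

/-- The quotient `(2n+1-m)! (n+m+1)! / ((n-m)! (2n+m+2)!)` of binomial coefficients that carries
the `n`-dependence of `topWeight`; it vanishes for `m > n`. -/
def chooseRatio (n m : ℕ) : ℚ :=
  (2 * n + 1 - m).choose (n + 1) / (2 * n + m + 2).choose (n + 1)

/-- The absolute value of the entry of `K_n⁻¹` at `((2(n-m), 2n+1), b_n)` for `1 ≤ m ≤ n`. -/
def topWeight (n m : ℕ) : ℚ := (3 * m + 2) * catalan m * chooseRatio n m

lemma chooseRatio_succ {n m : ℕ} (hm : m ≤ n) :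
    (2 * n + 1 - m) * (2 * n + m + 3) * chooseRatio n (m + 1)
      = (n - m) * (n + m + 2) * chooseRatio n m := by
  have hnum := cast_sub_mul_choose_succ (R := ℚ) (a := 2 * n - m) (k := n + 1) (by omega)
  have hden := cast_sub_mul_choose_succ (R := ℚ) (a := 2 * n + m + 2) (k := n + 1) (by omega)
  have h₀ : ((2 * n + m + 2).choose (n + 1) : ℚ) ≠ 0 := cast_choose_ne_zero (by omega)
  have h₁ : ((2 * n + m + 2 + 1).choose (n + 1) : ℚ) ≠ 0 := cast_choose_ne_zero (by omega)
  push_cast [Nat.cast_sub (show m ≤ 2 * n by omega)] at hnum hden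
  rw [chooseRatio, chooseRatio, show 2 * n + 1 - (m + 1) = 2 * n - m by omega,
    show 2 * n + 1 - m = 2 * n - m + 1 by omega,
    show 2 * n + (m + 1) + 2 = 2 * n + m + 2 + 1 by omega]
  field_simp
  linear_combination -(2 * n + m + 3) * (2 * n + m + 2).choose (n + 1) * hnum
    - (n - m) * (2 * n - m + 1).choose (n + 1) * hden

lemma topWeight_zero (n : ℕ) : topWeight n 0 = 1 := by
  have h := cast_sub_mul_choose_succ (R := ℚ) (a := 2 * n + 1) (k := n + 1) (by omega)
  have h₀ : ((2 * n + 1 + 1).choose (n + 1) : ℚ) ≠ 0 := cast_choose_ne_zero (by omega)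
  have hn : (n : ℚ) + 1 ≠ 0 := Nat.cast_add_one_ne_zero n
  have : (2 * (2 * n + 1).choose (n + 1) : ℚ) = (2 * n + 1 + 1).choose (n + 1) := by
    apply mul_left_cancel₀ hn
    push_cast at h
    linear_combination -h
  simp only [topWeight, chooseRatio, catalan_zero, Nat.sub_zero, Nat.add_zero]
  push_cast
  field_simp
  linear_combination this

/-- Links `chooseRatio n` and `chooseRatio (n + 1)`, of both of which it is a rational multiple. -/
def interRatio (n m : ℕ) : ℚ :=
  (2 * n + 2 - m).choose (n + 1) / (2 * n + m + 3).choose (n + 2)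

variable {n m : ℕ}

lemma chooseRatio_eq_interRatio (hm : m ≤ n + 1) :
    (2 * n + 2 - m) * (n + 2) * chooseRatio n m
      = (n + 1 - m) * (2 * n + m + 3) * interRatio n m := by
  have hnum := cast_sub_mul_choose_succ (R := ℚ) (a := 2 * n + 1 - m) (k := n + 1) (by omega)
  have hden := cast_succ_mul_choose_succ_succ (R := ℚ) (2 * n + m + 2) (n + 1)
  have h₀ : ((2 * n + m + 2).choose (n + 1) : ℚ) ≠ 0 := cast_choose_ne_zero (by omega)
  have h₁ : ((2 * n + m + 2 + 1).choose (n + 1 + 1) : ℚ) ≠ 0 := cast_choose_ne_zero (by omega)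
  push_cast [Nat.cast_sub (show m ≤ 2 * n + 1 by omega)] at hnum hden
  rw [chooseRatio, interRatio, show 2 * n + 2 - m = 2 * n + 1 - m + 1 by omega]
  field_simp
  linear_combination -(2 * n + m + 3) * (2 * n + m + 2).choose (n + 1) * hnum
    + (2 * n + 2 - m) * (2 * n + 1 - m).choose (n + 1) * hden

lemma chooseRatio_succ_eq_interRatio (hm : m ≤ n + 1) :
    (2 * n + m + 4) * (n + 2) * chooseRatio (n + 1) m
      = (2 * n + 3 - m) * (n + m + 2) * interRatio n m := by
  have hnum := cast_succ_mul_choose_succ_succ (R := ℚ) (2 * n + 2 - m) (n + 1)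
  have hden := cast_sub_mul_choose_succ (R := ℚ) (a := 2 * n + m + 3) (k := n + 2) (by omega)
  have h₀ : ((2 * n + m + 3).choose (n + 2) : ℚ) ≠ 0 := cast_choose_ne_zero (by omega)
  have h₁ : ((2 * n + m + 3 + 1).choose (n + 2) : ℚ) ≠ 0 := cast_choose_ne_zero (by omega)
  push_cast [Nat.cast_sub (show m ≤ 2 * n + 2 by omega)] at hnum hden
  rw [chooseRatio, interRatio, show 2 * (n + 1) + 1 - m = 2 * n + 2 - m + 1 by omega,
    show 2 * (n + 1) + m + 2 = 2 * n + m + 3 + 1 by omega]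
  field_simp
  linear_combination (2 * n + m + 4) * (2 * n + m + 3).choose (n + 2) * hnum
    - (2 * n + 3 - m) * (2 * n + 2 - m).choose (n + 1) * hden

lemma interRatio_succ (hm : m ≤ n + 1) :
    (2 * n + 2 - m) * (2 * n + m + 4) * interRatio n (m + 1)
      = (n + 1 - m) * (n + m + 2) * interRatio n m := by
  have hnum := cast_sub_mul_choose_succ (R := ℚ) (a := 2 * n + 1 - m) (k := n + 1) (by omega)
  have hden := cast_sub_mul_choose_succ (R := ℚ) (a := 2 * n + m + 3) (k := n + 2) (by omega)
  have h₀ : ((2 * n + m + 3).choose (n + 2) : ℚ) ≠ 0 := cast_choose_ne_zero (by omega)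
  have h₁ : ((2 * n + m + 3 + 1).choose (n + 2) : ℚ) ≠ 0 := cast_choose_ne_zero (by omega)
  push_cast [Nat.cast_sub (show m ≤ 2 * n + 1 by omega)] at hnum hden
  rw [interRatio, interRatio, show 2 * n + 2 - (m + 1) = 2 * n + 1 - m by omega,
    show 2 * n + 2 - m = 2 * n + 1 - m + 1 by omega,
    show 2 * n + (m + 1) + 3 = 2 * n + m + 3 + 1 by omega]
  field_simp
  linear_combination -(2 * n + m + 4) * (2 * n + m + 3).choose (n + 2) * hnum
    - (n + 1 - m) * (2 * n + 1 - m + 1).choose (n + 1) * hden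

lemma interRatio_zero (n : ℕ) : (2 * n + 3) * interRatio n 0 = n + 2 := by
  have h := cast_succ_mul_choose_succ_succ (R := ℚ) (2 * n + 2) (n + 1)
  have h₀ : ((2 * n + 2 + 1).choose (n + 1 + 1) : ℚ) ≠ 0 := cast_choose_ne_zero (by omega)
  simp only [interRatio, Nat.sub_zero, Nat.add_zero]
  push_cast at h
  field_simp
  linear_combination -h

lemma topWeight_add_mul_neg_two_pow (hm : m ≤ n + 1) :
    (n + 2) * ((topWeight n m + topWeight (n + 1) m) * (-2) ^ m)
      = (2 * n + 3) * ((-2) ^ m * (m + 1) * catalan m * interRatio n m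
        - (-2) ^ (m + 1) * ((m + 1 : ℕ) + 1) * catalan (m + 1) * interRatio n (m + 1)) := by
  have hm' : (m : ℚ) ≤ n + 1 := by exact_mod_cast hm
  have h₁ : (2 * n + 2 - m : ℚ) ≠ 0 := by linarith [(n.cast_nonneg : (0 : ℚ) ≤ n)]
  have h₂ : (2 * n + m + 4 : ℚ) ≠ 0 := by positivity
  apply mul_left_cancel₀ (mul_ne_zero h₁ h₂)
  have hcat := cast_catalan_succ m
  have hA := chooseRatio_eq_interRatio hm
  have hA' := chooseRatio_succ_eq_interRatio hm
  have hH := interRatio_succ hm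
  rw [topWeight, topWeight]
  push_cast
  linear_combination (-2) ^ m * (3 * m + 2) * catalan m
      * ((2 * n + m + 4) * hA + (2 * n + 2 - m) * hA')
    - 2 * (2 * n + 3) * (-2) ^ m * (2 * n + 2 - m) * (2 * n + m + 4) * interRatio n (m + 1) * hcat
    - 4 * (2 * n + 3) * (-2) ^ m * (2 * m + 1) * catalan m * hH

lemma chooseRatio_eq_zero (h : n < m) : chooseRatio n m = 0 := by
  rw [chooseRatio, Nat.choose_eq_zero_of_lt (by omega), Nat.cast_zero, zero_div]

/-- The generating polynomial of `topWeight n`. -/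
noncomputable def topPolynomial (n : ℕ) : ℚ[X] :=
  ∑ m ∈ range (n + 1), C (topWeight n m) * X ^ m

lemma coeff_topPolynomial (n m : ℕ) : (topPolynomial n).coeff m = topWeight n m := by
  simp only [topPolynomial, Polynomial.finsetSum_coeff, Polynomial.coeff_C_mul_X_pow,
    sum_ite_eq, mem_range]
  split_ifs with h
  · rfl
  · rw [topWeight, chooseRatio_eq_zero (by omega), mul_zero]

lemma natDegree_topPolynomial_le (n : ℕ) : (topPolynomial n).natDegree ≤ n :=
  Polynomial.natDegree_le_iff_coeff_eq_zero.mpr fun m hm => by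
    rw [coeff_topPolynomial, topWeight, chooseRatio_eq_zero (by omega), mul_zero]

lemma eval_topPolynomial (n : ℕ) {N : ℕ} (hN : n < N) (x : ℚ) :
    (topPolynomial n).eval x = ∑ m ∈ range N, topWeight n m * x ^ m := by
  simp only [Polynomial.eval_eq_sum_range' ((natDegree_topPolynomial_le n).trans_lt hN),
    coeff_topPolynomial]

lemma eval_neg_two_topPolynomial_add_succ (n : ℕ) :
    (topPolynomial n).eval (-2) + (topPolynomial (n + 1)).eval (-2) = 1 := by
  have hn : (n + 2 : ℚ) ≠ 0 := by positivity
  apply mul_left_cancel₀ hn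
  rw [eval_topPolynomial n (show n < n + 2 by omega),
    eval_topPolynomial (n + 1) (show n + 1 < n + 2 by omega), ← sum_add_distrib]
  simp only [← add_mul]
  rw [mul_sum, sum_congr rfl fun m hm => topWeight_add_mul_neg_two_pow
    (Nat.lt_succ_iff.mp (mem_range.mp hm)), ← mul_sum,
    sum_range_sub' fun m : ℕ => (-2 : ℚ) ^ m * (m + 1) * catalan m * interRatio n m]
  have hlast : interRatio n (n + 2) = 0 := by
    rw [interRatio, Nat.choose_eq_zero_of_lt (by omega), Nat.cast_zero, zero_div]
  rw [hlast, catalan_zero]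
  push_cast
  linear_combination interRatio_zero n

lemma eval_neg_two_topPolynomial (n : ℕ) :
    (topPolynomial n).eval (-2) = (1 + (-1) ^ n) / 2 := by
  induction n with
  | zero => simp [eval_topPolynomial 0 one_pos, topWeight_zero]
  | succ n ih =>
    rw [pow_succ]
    linear_combination eval_neg_two_topPolynomial_add_succ n - ih

end TopWeights

section Orthogonality

/-- The polynomial `T(-y(1+y))`, which generates the entries of a column of `K_n⁻¹` in row `2n+1`
and, through its recurrences, the rest of the column. -/
noncomputable def pullback (T : ℚ[X]) : ℚ[X] := T.comp (-(X * (1 + X)))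

lemma pullback_topPolynomial (n : ℕ) :
    pullback (topPolynomial n)
      = ∑ m ∈ range (n + 1), C ((-1) ^ m * topWeight n m) * (X ^ m * (1 + X) ^ m) := by
  simp only [pullback, topPolynomial, Polynomial.sum_comp, Polynomial.mul_comp,
    Polynomial.C_comp, Polynomial.X_pow_comp, neg_pow (X * _ : ℚ[X]), mul_pow]
  refine sum_congr rfl fun m _ => ?_
  rw [Polynomial.C_mul, Polynomial.C_pow, Polynomial.C_neg, Polynomial.C_1]
  ring

/-- The coefficient of `y^{2l}` in `y^m (1+y)^{l+m} (1+2y)`, divided by `3l+1`. -/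
def momentCoeff (l m : ℕ) : ℚ :=
  (l + m).factorial * invFactorial (2 * l - m) * invFactorial (2 * m - l + 1)

lemma coeff_two_mul_eq_momentCoeff (l m : ℕ) :
    (X ^ m * (1 + X) ^ (l + m) * (1 + C 2 * X) : ℚ[X]).coeff (2 * l)
      = (3 * l + 1) * momentCoeff l m := by
  have h₁ := mul_invFactorial (2 * l - m)
  have h₂ := mul_invFactorial (2 * m - l + 1)
  rw [show (X ^ m * (1 + X) ^ (l + m) * (1 + C 2 * X) : ℚ[X]) = X ^ m * (1 + X) ^ (l + m)
      + C 2 * (X ^ (m + 1) * (1 + X) ^ (l + m)) by ring, Polynomial.coeff_add,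
    Polynomial.coeff_C_mul, coeff_X_pow_mul_one_add_X_pow, coeff_X_pow_mul_one_add_X_pow]
  push_cast at h₁ h₂ ⊢
  rw [show (2 * l - (m + 1) : ℤ) = 2 * l - m - 1 by ring,
    show (l + m + m - 2 * l : ℤ) = 2 * m - l + 1 - 1 by ring,
    show (l + m + (m + 1) - 2 * l : ℤ) = 2 * m - l + 1 by ring, ← h₁, ← h₂, momentCoeff]
  ring

/-- The antidifference certifying `moment_recurrence`. -/
def momentCertificate (n l m : ℕ) : ℚ :=
  (-1) ^ m * (m + 1) * catalan m * ((l + m).factorial * invFactorial (2 * l + 2 - m)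
    * invFactorial (2 * m - l - 1)) * ((2 * n + 2 - m) * (2 * n + m + 2) * chooseRatio n m)

lemma momentCoeff_recurrence {n m : ℕ} (l : ℕ) (hm : m ≤ n) :
    (-1) ^ m * topWeight n m * (l * (4 * (n + 1) ^ 2 - (l + 1) ^ 2) * momentCoeff l m
        + 2 * (2 * l + 3) * ((n + 1) ^ 2 - (l + 1) ^ 2) * momentCoeff (l + 1) m)
      = (3 * l + 3) * (momentCertificate n l m - momentCertificate n l (m + 1)) := by
  have h₁ := mul_invFactorial (2 * l + 2 - m)
  have h₂ := mul_invFactorial (2 * l + 2 - m - 1)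
  have h₃ := mul_invFactorial (2 * m - l + 1)
  have h₄ := mul_invFactorial (2 * m - l + 1 - 1)
  have hA := chooseRatio_succ hm
  have hcat := cast_catalan_succ m
  simp only [momentCertificate, momentCoeff, topWeight]
  rw [show l + (m + 1) = l + m + 1 by ring, show l + 1 + m = l + m + 1 by ring,
    Nat.factorial_succ]
  push_cast at h₁ h₂ h₃ h₄ ⊢
  rw [show (2 * l - m : ℤ) = 2 * l + 2 - m - 1 - 1 by ring,
    show (2 * (l + 1) - m : ℤ) = 2 * l + 2 - m by ring,
    show (2 * m - (l + 1) + 1 : ℤ) = 2 * m - l + 1 - 1 by ring,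
    show (2 * m - l - 1 : ℤ) = 2 * m - l + 1 - 1 - 1 by ring,
    show (2 * l + 2 - (m + 1) : ℤ) = 2 * l + 2 - m - 1 by ring,
    show (2 * (m + 1) - l - 1 : ℤ) = 2 * m - l + 1 by ring, ← h₂, ← h₁, ← h₄, ← h₃]
  set b := ((l + m).factorial : ℚ) * invFactorial (2 * l + 2 - m) * invFactorial (2 * m - l + 1)
  linear_combination -(3 * l + 3) * (-1) ^ m * (l + m + 1) * (2 * l + 2 - m) * b * (
    (2 * n + 1 - m) * (2 * n + m + 3) * chooseRatio n (m + 1) * hcat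
      + 2 * (2 * m + 1) * catalan m * hA)

/-- The moments of the signed weights `(-1)^m topWeight n m`, whose vanishing is the
orthogonality behind the boundary condition in row `2n+2`. -/
def moment (n l : ℕ) : ℚ :=
  ∑ m ∈ range (n + 1), (-1) ^ m * topWeight n m * momentCoeff l m

lemma moment_recurrence (n l : ℕ) :
    l * (4 * (n + 1) ^ 2 - (l + 1) ^ 2) * moment n l
      + 2 * (2 * l + 3) * ((n + 1) ^ 2 - (l + 1) ^ 2) * moment n (l + 1) = 0 := by
  have hfirst : momentCertificate n l 0 = 0 := by
    rw [momentCertificate, invFactorial_of_neg (z := 2 * (0 : ℕ) - l - 1) (by omega)]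
    ring
  have hlast : momentCertificate n l (n + 1) = 0 := by
    rw [momentCertificate, chooseRatio_eq_zero (n.lt_succ_self)]
    ring
  have htelescope : ∑ m ∈ range (n + 1),
      (3 * l + 3) * (momentCertificate n l m - momentCertificate n l (m + 1)) = 0 := by
    rw [← mul_sum, sum_range_sub', hfirst, hlast, sub_zero, mul_zero]
  rw [← htelescope, moment, moment, mul_sum, mul_sum, ← sum_add_distrib]
  refine sum_congr rfl fun m hm => ?_
  rw [← momentCoeff_recurrence l (Nat.lt_succ_iff.mp (mem_range.mp hm))]
  ring

lemma moment_succ_eq_zero {n l : ℕ} (hl : l < n) : moment n (l + 1) = 0 := by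
  have hfactor : 2 * (2 * l + 3) * ((n + 1) ^ 2 - (l + 1) ^ 2) ≠ (0 : ℚ) := by
    have : (l : ℚ) < n := by exact_mod_cast hl
    have : (0 : ℚ) < (n + 1) ^ 2 - (l + 1) ^ 2 := by nlinarith [(l.cast_nonneg : (0 : ℚ) ≤ l)]
    positivity
  have hprev : l * moment n l = 0 := by
    cases l with
    | zero => rw [Nat.cast_zero, zero_mul]
    | succ l => rw [moment_succ_eq_zero (by omega), mul_zero]
  apply (mul_eq_zero_iff_left hfactor).mp
  linear_combination moment_recurrence n l - (4 * (n + 1) ^ 2 - (l + 1) ^ 2) * hprev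

lemma coeff_two_mul_pullback_topPolynomial_eq_moment (n l : ℕ) :
    ((1 + X) ^ l * (1 + C 2 * X) * pullback (topPolynomial n)).coeff (2 * l)
      = (3 * l + 1) * moment n l := by
  rw [pullback_topPolynomial, mul_sum, Polynomial.finsetSum_coeff, moment, mul_sum]
  refine sum_congr rfl fun m _ => ?_
  have hsplit : (1 + X) ^ l * (1 + C 2 * X) * (X ^ m * (1 + X) ^ m)
      = (X ^ m * (1 + X) ^ (l + m) * (1 + C 2 * X) : ℚ[X]) := by ring
  rw [mul_left_comm, hsplit, Polynomial.coeff_C_mul, coeff_two_mul_eq_momentCoeff]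
  ring

end Orthogonality

section BoundaryConditions

lemma natDegree_pullback_le {T : ℚ[X]} {n : ℕ} (hT : T.natDegree ≤ n) :
    (pullback T).natDegree ≤ 2 * n := by
  have hquad : (-(X * (1 + X)) : ℚ[X]).natDegree ≤ 2 := by compute_degree
  calc (pullback T).natDegree ≤ T.natDegree * (-(X * (1 + X)) : ℚ[X]).natDegree :=
        Polynomial.natDegree_comp_le
    _ ≤ n * 2 := Nat.mul_le_mul hT hquad
    _ = 2 * n := mul_comm n 2

lemma coeff_zero_pullback (T : ℚ[X]) : (pullback T).coeff 0 = T.coeff 0 := by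
  simp [pullback, Polynomial.coeff_zero_eq_eval_zero]

lemma eval_one_pullback (T : ℚ[X]) : (pullback T).eval 1 = T.eval (-2) := by
  norm_num [pullback]

lemma coeff_mk_one_mul {p : ℚ[X]} {N : ℕ} (hp : p.natDegree ≤ N) :
    (.mk 1 * p : ℚ⟦X⟧).coeff N = p.eval 1 := by
  rw [mul_comm, PowerSeries.coeff_mul, Finset.Nat.sum_antidiagonal_eq_sum_range_succ_mk,
    Polynomial.eval_eq_sum_range' (Nat.lt_succ_of_le hp)]
  simp

/-- The generating series of the entries of a column of `K_n⁻¹` on the diagonal, as determined by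
the entries in row `2n+1` which `T` generates: `-(1/(1-y^2) + T(-y(1+y))/(1-y))`. -/
noncomputable def diagonalSeries (T : ℚ[X]) : ℚ⟦X⟧ :=
  -(.mk (fun j => if Even j then 1 else 0) + .mk 1 * pullback T)

lemma coeff_zero_diagonalSeries (T : ℚ[X]) :
    (diagonalSeries T).coeff 0 = -(1 + T.coeff 0) := by
  simp [diagonalSeries, coeff_zero_pullback]

lemma one_add_X_mul_mk_even :
    (1 + .X) * .mk (fun j => if Even j then 1 else 0) = (.mk 1 : ℚ⟦X⟧) := by
  ext (_ | j)
  · simp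
  · rw [add_mul, one_mul, map_add, PowerSeries.coeff_succ_X_mul]
    simp only [PowerSeries.coeff_mk, Nat.even_add_one, Pi.one_apply]
    split_ifs <;> simp_all

lemma one_add_X_pow_succ_mul_diagonalSeries (T : ℚ[X]) (l : ℕ) :
    (1 + .X) ^ (l + 1) * diagonalSeries T
      = -(.mk 1 * ((1 + X) ^ l + (1 + X) ^ (l + 1) * pullback T : ℚ[X])) := by
  rw [diagonalSeries]
  push_cast
  linear_combination -(1 + .X) ^ l * one_add_X_mul_mk_even

/-- The conditions on the values `T_m` at the vertices `(2(n-m), 2n+1)` under which they extend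
to a solution of `K_n v = e_b`, where `b` is `bvertex n`: the solution vanishes at the vertices
`(-1, -1)` and `(2(n-l), 2n+2)`, which lie just outside of `V_n`. For odd `n` the vertex
`(2n, 2n+1)` is not in `V_n` either, and `T_0 = -1` accounts for the right-hand side at `b`. -/
structure IsColumnPolynomial (n : ℕ) (T : ℚ[X]) : Prop where
  natDegree_le : T.natDegree ≤ n
  coeff_zero : T.coeff 0 = if n % 2 = 1 then -1 else 0
  coeff_left : (diagonalSeries T).coeff (2 * n + 1) = 0
  coeff_top : ∀ l, 1 ≤ l → l ≤ n → ((1 + .X) ^ (l + 1) * diagonalSeries T).coeff (2 * l) = 0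

lemma coeff_mk_one_mul_one_add_X_pow_mul_pullback_topPolynomial {n l : ℕ} (hl : l ≤ n) :
    (.mk 1 * ((1 + X) ^ (l + 1) * pullback (topPolynomial n) : ℚ[X]) : ℚ⟦X⟧).coeff (2 * l)
      = 2 ^ l := by
  induction l with
  | zero => simp [coeff_zero_pullback, coeff_topPolynomial, topWeight_zero]
  | succ l ih =>
    set Q := pullback (topPolynomial n)
    have hsplit : (.mk 1 * ((1 + X) ^ (l + 2) * Q : ℚ[X]) : ℚ⟦X⟧)
        = .X ^ 2 * (.C 2 * (.mk 1 * ((1 + X) ^ (l + 1) * Q : ℚ[X])))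
          + ((1 + X) ^ (l + 1) * (1 + C 2 * X) * Q : ℚ[X]) := by
      push_cast
      rw [map_ofNat]
      linear_combination (1 + .X) ^ (l + 1) * (1 + 2 * .X) * (Q : ℚ⟦X⟧)
        * PowerSeries.mk_one_mul_one_sub_eq_one ℚ
    have horth := coeff_two_mul_pullback_topPolynomial_eq_moment n (l + 1)
    rw [hsplit, map_add, Polynomial.coeff_coe, horth, moment_succ_eq_zero (by omega), mul_zero,
      add_zero, mul_add_one, PowerSeries.coeff_X_pow_mul, PowerSeries.coeff_C_mul,
      ih (by omega), pow_succ']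

/-- The generating polynomial of the entries of `K_n⁻¹` in row `2n+1` and column `b_n`. -/
noncomputable def columnPolynomial (n : ℕ) : ℚ[X] :=
  C ((-1) ^ n) * topPolynomial n - C ((1 + (-1) ^ n) / 2)

lemma pullback_columnPolynomial (n : ℕ) : pullback (columnPolynomial n)
    = C ((-1) ^ n) * pullback (topPolynomial n) - C ((1 + (-1) ^ n) / 2) := by
  simp only [pullback, columnPolynomial, Polynomial.sub_comp, Polynomial.mul_comp,
    Polynomial.C_comp]

lemma natDegree_columnPolynomial_le (n : ℕ) : (columnPolynomial n).natDegree ≤ n :=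
  Polynomial.natDegree_sub_C.trans_le <|
    (Polynomial.natDegree_C_mul_le _ _).trans (natDegree_topPolynomial_le n)

lemma coeff_zero_columnPolynomial (n : ℕ) :
    (columnPolynomial n).coeff 0 = if n % 2 = 1 then -1 else 0 := by
  rw [columnPolynomial, Polynomial.coeff_sub, Polynomial.coeff_C_mul, coeff_topPolynomial,
    topWeight_zero, Polynomial.coeff_C_zero]
  rcases Nat.even_or_odd n with h | h
  · rw [if_neg (by grind), h.neg_one_pow]; norm_num
  · rw [if_pos (by grind), h.neg_one_pow]; norm_num

lemma coeff_left_columnPolynomial (n : ℕ) :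
    (diagonalSeries (columnPolynomial n)).coeff (2 * n + 1) = 0 := by
  have hdeg : (pullback (columnPolynomial n)).natDegree ≤ 2 * n + 1 :=
    (natDegree_pullback_le (natDegree_columnPolynomial_le n)).trans (Nat.le_succ _)
  have hroot : (columnPolynomial n).eval (-2) = 0 := by
    simp only [columnPolynomial, Polynomial.eval_sub, Polynomial.eval_mul, Polynomial.eval_C,
      eval_neg_two_topPolynomial]
    rcases neg_one_pow_eq_or ℚ n with h | h <;> norm_num [h]
  rw [diagonalSeries, map_neg, map_add, coeff_mk_one_mul hdeg, eval_one_pullback, hroot,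
    PowerSeries.coeff_mk, if_neg (Nat.not_even_two_mul_add_one n), add_zero, neg_zero]

lemma coeff_top_columnPolynomial {n l : ℕ} (hl : 1 ≤ l) (hln : l ≤ n) :
    ((1 + .X) ^ (l + 1) * diagonalSeries (columnPolynomial n)).coeff (2 * l) = 0 := by
  have hsplit : (1 + .X) ^ (l + 1) * diagonalSeries (columnPolynomial n)
      = .C ((1 + (-1) ^ n) / 2) * (.mk 1 * ((1 + X) ^ (l + 1) : ℚ[X]))
        - .mk 1 * ((1 + X) ^ l : ℚ[X])
        - .C ((-1) ^ n) * (.mk 1 * ((1 + X) ^ (l + 1) * pullback (topPolynomial n) : ℚ[X])) := by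
    rw [one_add_X_pow_succ_mul_diagonalSeries, pullback_columnPolynomial]
    push_cast
    ring
  have hpow {j : ℕ} (hj : j ≤ 2 * l) :
      (.mk 1 * ((1 + X) ^ j : ℚ[X]) : ℚ⟦X⟧).coeff (2 * l) = 2 ^ j := by
    rw [coeff_mk_one_mul (by compute_degree!)]
    norm_num
  rw [hsplit, map_sub, map_sub, PowerSeries.coeff_C_mul, PowerSeries.coeff_C_mul,
    hpow (by omega), hpow (by omega),
    coeff_mk_one_mul_one_add_X_pow_mul_pullback_topPolynomial hln]
  ring

lemma isColumnPolynomial_columnPolynomial (n : ℕ) :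
    IsColumnPolynomial n (columnPolynomial n) where
  natDegree_le := natDegree_columnPolynomial_le n
  coeff_zero := coeff_zero_columnPolynomial n
  coeff_left := coeff_left_columnPolynomial n
  coeff_top _ := coeff_top_columnPolynomial

lemma coeff_columnPolynomial {n i : ℕ} (hi : i < n) :
    (columnPolynomial n).coeff (n - i) = (-1) ^ (n - i) * pnk n i 0 := by
  have hsign : (-1 : ℚ) ^ n = (-1) ^ (n - i) * (-1) ^ i := by
    rw [← pow_add, Nat.sub_add_cancel hi.le]
  have hnum : ((n + i + 1).choose (n + 1) : ℚ)
      = (n + i + 1).factorial / ((n + 1).factorial * i.factorial) := by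
    rw [add_right_comm, Nat.cast_add_choose]
  have hden : ((3 * n - i + 2).choose (n + 1) : ℚ)
      = (3 * n - i + 2).factorial / ((n + 1).factorial * (2 * n - i + 1).factorial) := by
    rw [show 3 * n - i + 2 = n + 1 + (2 * n - i + 1) by omega, Nat.cast_add_choose]
  rw [columnPolynomial, Polynomial.coeff_sub, Polynomial.coeff_C_mul,
    Polynomial.coeff_C_of_ne_zero (by omega), coeff_topPolynomial, topWeight, chooseRatio, pnk,
    show 2 * n + 1 - (n - i) = n + i + 1 by omega,
    show 2 * n + (n - i) + 2 = 3 * n - i + 2 by omega, hnum, hden, hsign, Nat.cast_sub hi.le]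
  simp only [Nat.mul_zero, Nat.sub_zero]
  field_simp
  ring

end BoundaryConditions

section KasteleynRows

lemma mem_Vfin {n : ℕ} {v : ℤ × ℤ} : v ∈ Vfin n ↔ memV n v := by
  simp only [Vfin, mem_filter, mem_product, mem_Icc, memV]
  omega

lemma kfun_sub_kfun_of_even {a x : ℤ} (h : (a + x) % 2 = 0) (hne : a ≠ x) (y : ℤ × ℤ) :
    kfun (a, x) y - kfun y (a, x) = (if y = (a - 1, x) then 1 else 0)
      + (if y = (a, x + 1) then 1 else 0) + (if y = (a, x - 1) then 1 else 0) := by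
  obtain ⟨b, z⟩ := y
  simp only [kfun, Prod.mk.injEq]
  grind

lemma kfun_sub_kfun_of_diagonal (a : ℤ) (y : ℤ × ℤ) :
    kfun (a, a) y - kfun y (a, a) = (if y = (a - 1, a) then 1 else 0)
      + (if y = (a, a + 1) then 1 else 0) + (if y = (a, a - 1) then 1 else 0)
      + (if y = (a - 1, a - 1) then 1 else 0) - (if y = (a + 1, a + 1) then 1 else 0) := by
  obtain ⟨b, z⟩ := y
  simp only [kfun, Prod.mk.injEq]
  grind (splits := 12)

lemma kfun_sub_kfun_of_odd {a x : ℤ} (h : (a + x) % 2 = 1) (y : ℤ × ℤ) :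
    kfun (a, x) y - kfun y (a, x) = -((if y = (a + 1, x) then 1 else 0)
      + (if y = (a, x + 1) then 1 else 0) + (if y = (a, x - 1) then 1 else 0)) := by
  obtain ⟨b, z⟩ := y
  simp only [kfun, Prod.mk.injEq]
  grind

variable {n : ℕ} {g : ℤ × ℤ → ℚ} {a x : ℤ}

lemma Kmat_mulVec_apply (g : ℤ × ℤ → ℚ) {u : ℤ × ℤ} (hu : u ∈ Vfin n) :
    (Kmat n).mulVec (fun v => g v) ⟨u, hu⟩ = ∑ v ∈ Vfin n, (kfun u v - kfun v u) * g v :=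
  sum_coe_sort (Vfin n) fun v => (kfun u v - kfun v u) * g v

lemma sum_ite_eq_one_mul (hg : ∀ v ∉ Vfin n, g v = 0) (u : ℤ × ℤ) :
    ∑ v ∈ Vfin n, (if v = u then 1 else 0) * g v = g u := by
  simp only [ite_mul, one_mul, zero_mul, sum_ite_eq']
  exact ite_eq_left_iff.mpr fun hu => (hg u hu).symm

lemma Kmat_mulVec_apply_of_even (hg : ∀ v ∉ Vfin n, g v = 0) (hax : (a, x) ∈ Vfin n)
    (h : (a + x) % 2 = 0) (hne : a ≠ x) :
    (Kmat n).mulVec (fun v => g v) ⟨(a, x), hax⟩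
      = g (a - 1, x) + g (a, x + 1) + g (a, x - 1) := by
  simp only [Kmat_mulVec_apply, kfun_sub_kfun_of_even h hne, add_mul, sum_add_distrib,
    sum_ite_eq_one_mul hg]

lemma Kmat_mulVec_apply_diagonal (hg : ∀ v ∉ Vfin n, g v = 0) (ha : (a, a) ∈ Vfin n) :
    (Kmat n).mulVec (fun v => g v) ⟨(a, a), ha⟩
      = g (a - 1, a) + g (a, a + 1) + g (a - 1, a - 1) - g (a + 1, a + 1) := by
  have hbelow : g (a, a - 1) = 0 := hg _ fun h => by
    have := (mem_Vfin.mp h).2.2.1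
    omega
  simp only [Kmat_mulVec_apply, kfun_sub_kfun_of_diagonal, add_mul, sub_mul, sum_add_distrib,
    sum_sub_distrib, sum_ite_eq_one_mul hg, hbelow, add_zero]

lemma Kmat_mulVec_apply_of_odd (hg : ∀ v ∉ Vfin n, g v = 0) (hax : (a, x) ∈ Vfin n)
    (h : (a + x) % 2 = 1) :
    (Kmat n).mulVec (fun v => g v) ⟨(a, x), hax⟩
      = -(g (a + 1, x) + g (a, x + 1) + g (a, x - 1)) := by
  simp only [Kmat_mulVec_apply, kfun_sub_kfun_of_odd h, neg_mul, add_mul, sum_neg_distrib,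
    sum_add_distrib, sum_ite_eq_one_mul hg]

end KasteleynRows

section Column

/-- The generating polynomial of the entries of a column of `K_n⁻¹` at the vertices
`(a, a+2k+1)`, as determined by the entries in row `2n+1` which `T` generates. -/
noncomputable def oddPolynomial (T : ℚ[X]) (k : ℕ) : ℚ[X] :=
  X ^ (2 * k) * pullback (Polynomial.divX^[k] T)

lemma natDegree_divX_iterate_le {T : ℚ[X]} {n : ℕ} (hT : T.natDegree ≤ n) (k : ℕ) :
    (Polynomial.divX^[k] T).natDegree ≤ n - k := by
  induction k with
  | zero => simpa using hT
  | succ k ih =>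
    rw [Function.iterate_succ_apply', Polynomial.natDegree_divX_eq_natDegree_tsub_one]
    omega

lemma coeff_divX_iterate (T : ℚ[X]) (k m : ℕ) :
    (Polynomial.divX^[k] T).coeff m = T.coeff (m + k) := by
  induction k generalizing m with
  | zero => rfl
  | succ k ih => rw [Function.iterate_succ_apply', Polynomial.coeff_divX, ih]; ring_nf

lemma coeff_oddPolynomial_of_lt (T : ℚ[X]) {k c : ℕ} (hc : c < 2 * k) :
    (oddPolynomial T k).coeff c = 0 := by
  rw [oddPolynomial, Polynomial.coeff_X_pow_mul', if_neg hc.not_ge]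

lemma coeff_two_mul_oddPolynomial (T : ℚ[X]) (k : ℕ) :
    (oddPolynomial T k).coeff (2 * k) = T.coeff k := by
  rw [oddPolynomial, Polynomial.coeff_X_pow_mul', if_pos le_rfl, Nat.sub_self,
    coeff_zero_pullback, coeff_divX_iterate, Nat.zero_add]

lemma X_mul_oddPolynomial_add (T : ℚ[X]) (k : ℕ) :
    X * oddPolynomial T k + (1 + X) * oddPolynomial T (k + 1)
      = C (T.coeff k) * X ^ (2 * k + 1) := by
  have hpull (S : ℚ[X]) : pullback S = -(X * (1 + X)) * pullback S.divX + C (S.coeff 0) := by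
    conv_lhs => rw [← Polynomial.X_mul_divX_add S]
    rw [pullback, Polynomial.add_comp, Polynomial.mul_comp, Polynomial.X_comp, Polynomial.C_comp,
      pullback]
  have hcoeff := coeff_divX_iterate T k 0
  rw [Nat.zero_add] at hcoeff
  rw [oddPolynomial, oddPolynomial, Function.iterate_succ_apply', hpull (Polynomial.divX^[k] T),
    hcoeff]
  ring

lemma one_add_X_mul_oddPolynomial_zero_add (T : ℚ[X]) :
    (1 + .X) * (oddPolynomial T 0 : ℚ⟦X⟧) + (1 - .X ^ 2) * diagonalSeries T = -1 := by
  have heven := one_add_X_mul_mk_even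
  have hone := PowerSeries.mk_one_mul_one_sub_eq_one ℚ
  simp only [oddPolynomial, Nat.mul_zero, pow_zero, one_mul, Function.iterate_zero_apply,
    diagonalSeries]
  linear_combination -(1 - .X) * heven - (1 + (1 + .X) * (pullback T : ℚ⟦X⟧)) * hone

/-- The extension to all of `V_n`, by zero outside, of the values `T_m` at the vertices
`(2(n-m), 2n+1)`. On the vertices `(a, a+2k)` and `(a, a+2k+1)` it is generated, in powers of
`y` with exponent `2n-a`, by `(-1)^k (1+y)^k diagonalSeries T` and `oddPolynomial T k`. -/
noncomputable def column (n : ℕ) (T : ℚ[X]) (v : ℤ × ℤ) : ℚ :=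
  if v ∈ Vfin n then
    let c := (2 * n - v.1).toNat
    let k := ((v.2 - v.1) / 2).toNat
    if (v.1 + v.2) % 2 = 0 then (-1) ^ k * ((1 + .X) ^ k * diagonalSeries T).coeff c
    else (oddPolynomial T k).coeff c
  else 0

variable {n : ℕ} {T : ℚ[X]} {a x : ℤ} {c k : ℕ}

lemma column_eq_zero {v : ℤ × ℤ} (hv : v ∉ Vfin n) : column n T v = 0 := if_neg hv

lemma column_of_odd_of_mem (hv : (a, x) ∈ Vfin n) (ha : a = 2 * n - c) (hx : x = a + 2 * k + 1) :
    column n T (a, x) = (oddPolynomial T k).coeff c := by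
  simp only [column, if_pos hv]
  rw [if_neg (by omega), show (2 * n - a).toNat = c by omega,
    show ((x - a) / 2).toNat = k by omega]

lemma column_of_even_of_mem (hv : (a, x) ∈ Vfin n) (ha : a = 2 * n - c) (hx : x = a + 2 * k) :
    column n T (a, x) = (-1) ^ k * ((1 + .X) ^ k * diagonalSeries T).coeff c := by
  simp only [column, if_pos hv]
  rw [if_pos (by omega), show (2 * n - a).toNat = c by omega,
    show ((x - a) / 2).toNat = k by omega]

lemma natDegree_oddPolynomial_le (hT : T.natDegree ≤ n) (hk : k ≤ n) :
    (oddPolynomial T k).natDegree ≤ 2 * n := by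
  have h := natDegree_pullback_le (natDegree_divX_iterate_le hT k)
  rw [oddPolynomial]
  compute_degree
  omega

lemma column_of_odd (hT : T.natDegree ≤ n) (ha : a = 2 * n - c) (hx : x = a + 2 * k + 1)
    (hk : k ≤ n) (hc : n % 2 = 1 → c ≠ 0) : column n T (a, x) = (oddPolynomial T k).coeff c := by
  by_cases hv : (a, x) ∈ Vfin n
  · exact column_of_odd_of_mem hv ha hx
  rw [column_eq_zero hv]
  rcases lt_or_ge c (2 * k) with hck | hck
  · exact (coeff_oddPolynomial_of_lt T hck).symm
  · have hnc : 2 * n < c := by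
      simp only [mem_Vfin, memV] at hv
      omega
    exact (Polynomial.coeff_eq_zero_of_natDegree_lt
      ((natDegree_oddPolynomial_le hT hk).trans_lt hnc)).symm

namespace IsColumnPolynomial

lemma column_diagonal (hT : IsColumnPolynomial n T) (ha : a = 2 * n - c) (hc : c ≤ 2 * n + 1) :
    column n T (a, a) = (diagonalSeries T).coeff c := by
  rcases hc.lt_or_eq with hc | rfl
  · have hv : (a, a) ∈ Vfin n := by
      simp only [mem_Vfin, memV]
      omega
    simpa using column_of_even_of_mem (k := 0) (T := T) hv ha (by omega)
  · rw [column_eq_zero fun hv => by have := (mem_Vfin.mp hv).1; omega, hT.coeff_left]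

lemma column_of_even (hT : IsColumnPolynomial n T) (ha : a = 2 * n - c) (hx : x = a + 2 * k)
    (hc : c ≤ 2 * n) (hk : 2 * k ≤ c + 2) (hc₀ : c = 0 → k = 0) :
    column n T (a, x) = (-1) ^ k * ((1 + .X) ^ k * diagonalSeries T).coeff c := by
  by_cases hv : (a, x) ∈ Vfin n
  · exact column_of_even_of_mem hv ha hx
  · obtain ⟨l, rfl⟩ : ∃ l, k = l + 1 := ⟨k - 1, by simp only [mem_Vfin, memV] at hv; omega⟩
    obtain rfl : c = 2 * l := by
      simp only [mem_Vfin, memV] at hv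
      omega
    rw [column_eq_zero hv, hT.coeff_top l (by omega) (by omega), mul_zero]

lemma mulVec_column_of_odd (hT : IsColumnPolynomial n T) (hv : (a, x) ∈ Vfin n)
    (ha : a = 2 * n - (c + 1 : ℕ)) (hx : x = a + 2 * k + 1) :
    (Kmat n).mulVec (fun v => column n T v) ⟨(a, x), hv⟩ = 0 := by
  have hmem := mem_Vfin.mp hv
  simp only [memV] at hmem
  have hrec : ((1 + .X) ^ (k + 1) * diagonalSeries T).coeff (c + 1)
      = ((1 + .X) ^ k * diagonalSeries T).coeff (c + 1)
        + ((1 + .X) ^ k * diagonalSeries T).coeff c := by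
    rw [pow_succ', mul_assoc, one_add_mul, map_add, PowerSeries.coeff_succ_X_mul]
  rw [Kmat_mulVec_apply_of_odd (fun _ => column_eq_zero) hv (by omega),
    hT.column_of_even (c := c) (k := k) (by omega) (by omega) (by omega) (by omega) (by omega),
    hT.column_of_even (c := c + 1) (k := k + 1) (by omega) (by omega) (by omega) (by omega)
      (by omega),
    hT.column_of_even (c := c + 1) (k := k) (by omega) (by omega) (by omega) (by omega)
      (by omega), hrec, pow_succ]
  ring

lemma mulVec_column_of_even (hT : IsColumnPolynomial n T) (hv : (a, x) ∈ Vfin n)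
    (ha : a = 2 * n - c) (hx : x = a + 2 * (k + 1 : ℕ)) :
    (Kmat n).mulVec (fun v => column n T v) ⟨(a, x), hv⟩ = 0 := by
  have hmem := mem_Vfin.mp hv
  simp only [memV] at hmem
  have hrec := congrArg (Polynomial.coeff · (c + 1)) (X_mul_oddPolynomial_add T k)
  simp only [add_mul, one_mul, Polynomial.coeff_add, Polynomial.coeff_X_mul,
    Polynomial.coeff_C_mul_X_pow, if_neg (show c + 1 ≠ 2 * k + 1 by omega)] at hrec
  rw [Kmat_mulVec_apply_of_even (fun _ => column_eq_zero) hv (by omega) (by omega),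
    column_of_odd hT.natDegree_le (c := c + 1) (k := k + 1) (by omega) (by omega) (by omega)
      (by omega),
    column_of_odd hT.natDegree_le (c := c) (k := k + 1) (by omega) (by omega) (by omega)
      (by omega),
    column_of_odd hT.natDegree_le (c := c) (k := k) (by omega) (by omega) (by omega) (by omega)]
  linear_combination hrec

lemma mulVec_column_diagonal (hT : IsColumnPolynomial n T) (hv : (a, a) ∈ Vfin n)
    (ha : a = 2 * n - c) :
    (Kmat n).mulVec (fun v => column n T v) ⟨(a, a), hv⟩
      = column n T (a, a + 1) - (oddPolynomial T 0).coeff c := by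
  have hmem := mem_Vfin.mp hv
  simp only [memV] at hmem
  have hnext : column n T (a + 1, a + 1)
      = (PowerSeries.X ^ 2 * diagonalSeries T).coeff (c + 1) := by
    cases c with
    | zero =>
      rw [column_eq_zero fun hv => by have := (mem_Vfin.mp hv).2.1; omega,
        PowerSeries.coeff_X_pow_mul', if_neg (by omega)]
    | succ c =>
      rw [hT.column_diagonal (c := c) (by omega) (by omega)]
      exact (PowerSeries.coeff_X_pow_mul _ 2 c).symm
  have hrec := congrArg (PowerSeries.coeff (c + 1)) (one_add_X_mul_oddPolynomial_zero_add T)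
  rw [one_add_mul, sub_mul, one_mul, map_add, map_add, map_sub, PowerSeries.coeff_succ_X_mul,
    Polynomial.coeff_coe, Polynomial.coeff_coe, map_neg, PowerSeries.coeff_one,
    if_neg c.succ_ne_zero] at hrec
  rw [Kmat_mulVec_apply_diagonal (fun _ => column_eq_zero) hv,
    column_of_odd hT.natDegree_le (c := c + 1) (k := 0) (by omega) (by omega) (by omega)
      (by omega),
    hT.column_diagonal (c := c + 1) (by omega) (by omega), hnext]
  linear_combination hrec

lemma mulVec_column_bvertex (hT : IsColumnPolynomial n T) (hb : bvertex n ∈ Vfin n) :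
    (Kmat n).mulVec (fun v => column n T v) ⟨bvertex n, hb⟩ = 1 := by
  rcases Nat.mod_two_eq_zero_or_one n with hn | hn
  · have hbv : bvertex n = (2 * (n : ℤ), 2 * (n : ℤ) + 1) := by simp [bvertex, hn]
    simp only [hbv] at hb ⊢
    rw [Kmat_mulVec_apply_of_odd (fun _ => column_eq_zero) hb (by omega),
      column_eq_zero fun hv => by have := (mem_Vfin.mp hv).2.1; omega,
      column_eq_zero fun hv => by have := (mem_Vfin.mp hv).2.2.2.1; omega, add_sub_cancel_right,
      hT.column_diagonal (c := 0) (by simp) (by omega),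
      coeff_zero_diagonalSeries, hT.coeff_zero, if_neg (by omega)]
    norm_num
  · have hbv : bvertex n = (2 * (n : ℤ), 2 * (n : ℤ)) := by simp [bvertex, hn]
    simp only [hbv] at hb ⊢
    rw [hT.mulVec_column_diagonal (c := 0) hb (by simp),
      column_eq_zero fun hv => (mem_Vfin.mp hv).2.2.2.2 ⟨hn, rfl, rfl⟩,
      coeff_two_mul_oddPolynomial T 0, hT.coeff_zero, if_pos hn]
    norm_num

lemma mulVec_column (hT : IsColumnPolynomial n T) (hb : bvertex n ∈ Vfin n) :
    (Kmat n).mulVec (fun v => column n T v) = Pi.single ⟨bvertex n, hb⟩ 1 := by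
  ext ⟨⟨a, x⟩, hv⟩
  by_cases hax : (a, x) = bvertex n
  · simp only [hax, hT.mulVec_column_bvertex hb, Pi.single_eq_same]
  rw [Pi.single_eq_of_ne (by simpa using hax)]
  have hmem := mem_Vfin.mp hv
  simp only [memV] at hmem
  simp only [bvertex, Prod.mk.injEq] at hax
  obtain ⟨c, ha⟩ : ∃ c : ℕ, a = 2 * n - c := ⟨(2 * n - a).toNat, by omega⟩
  rcases Int.emod_two_eq_zero_or_one (a + x) with hpar | hpar
  · obtain ⟨k, hx⟩ : ∃ k : ℕ, x = a + 2 * k := ⟨((x - a) / 2).toNat, by omega⟩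
    rcases k with _ | k
    · obtain rfl : x = a := by omega
      rw [hT.mulVec_column_diagonal hv ha,
        column_of_odd hT.natDegree_le (k := 0) ha (by omega) (by omega) (by omega), sub_self]
    · exact hT.mulVec_column_of_even hv ha hx
  · obtain ⟨k, hx⟩ : ∃ k : ℕ, x = a + 2 * k + 1 := ⟨((x - a) / 2).toNat, by omega⟩
    obtain ⟨c, rfl⟩ : ∃ d, c = d + 1 := ⟨c - 1, by omega⟩
    exact hT.mulVec_column_of_odd hv ha hx

end IsColumnPolynomial

lemma column_top_row {i : ℕ} (hi : i < n) :
    column n T (2 * i, 2 * n + 1) = T.coeff (n - i) := by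
  have hv : (2 * (i : ℤ), 2 * (n : ℤ) + 1) ∈ Vfin n := by
    simp only [mem_Vfin, memV]
    omega
  rw [column_of_odd_of_mem (c := 2 * (n - i)) (k := n - i) hv (by omega) (by omega),
    coeff_two_mul_oddPolynomial]

end Column

/-- Let `n ≥ 1` and suppose the Kasteleyn matrix `K_n` over `ℚ` is invertible. Then for
`0 ≤ i ≤ n−1`, the `((2i,2n+1), b_n)` entry of `K_n⁻¹` equals `(−1)^{n−i}·p(n,i,0)`. -/
theorem Kinv_top_row (n : ℕ) (hn : 1 ≤ n) (hdet : IsUnit (Kmat n).det)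
    (i : ℕ) (hi : i + 1 ≤ n)
    (hx : ((2*(i:ℤ), 2*(n:ℤ)+1)) ∈ Vfin n) (hb : bvertex n ∈ Vfin n) :
    (Kmat n)⁻¹ ⟨(2*(i:ℤ), 2*(n:ℤ)+1), hx⟩ ⟨bvertex n, hb⟩
      = (-1)^(n-i) * pnk n i 0 := by
  have hsol := (isColumnPolynomial_columnPolynomial n).mulVec_column hb
  have hcol : ((Kmat n)⁻¹).col ⟨bvertex n, hb⟩ =
      fun v : Vfin n => column n (columnPolynomial n) v := by
    rw [← Matrix.mulVec_single_one, ← hsol, Matrix.mulVec_mulVec,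
      Matrix.nonsing_inv_mul _ hdet, Matrix.one_mulVec]
  calc (Kmat n)⁻¹ ⟨(2*(i:ℤ), 2*(n:ℤ)+1), hx⟩ ⟨bvertex n, hb⟩
      = column n (columnPolynomial n) (2 * i, 2 * n + 1) := congrFun hcol _
    _ = (columnPolynomial n).coeff (n - i) := column_top_row hi
    _ = (-1) ^ (n - i) * pnk n i 0 := coeff_columnPolynomial hi
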